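/- arXiv:1709.02188 — 2 statements merged into one kernel-verified Lean document; each statement's English description precedes it below -/
import Mathlib

section
/- Let φ : ℂ → ℂ be holomorphic and injective on the open unit disk 𝔻, let U = φ(𝔻), and suppose there exist H > 0 and 0 < α ≤ 1 such that |φ(z₁) − φ(z₂)| ≤ H·|φ′(0)|·|z₁ − z₂|^α for all z₁, z₂ ∈ 𝔻. Then (1/4)·|φ′(0)| ≤ dist(φ(0), ∂U) ≤ diam(U) ≤ 2^α·H·|φ′(0)|. In particular |φ′(0)|, dist(φ(0), ∂U) and diam(U) are pairwise comparable with constants depending only on H and α. -/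
open Complex Metric

/-!
Write `U = φ(𝔻)`. Only the lower bound on the distance to `∂U` is deep: it says that `U` contains
the disk of radius `|φ'(0)| / 4` about `φ(0)`, which is Koebe's one-quarter theorem. Here Koebe's
theorem comes from a length-area argument for the measure `dA / |w|²`, which is invariant under
`w ↦ w⁻¹`.

Let `f` be univalent on the disk of radius `R` about `c`, with `f(c) = 0` and `f(z) f(w) ≠ 1` for
all `z`, `w`. The image under `f` of the annulus `ε < |z - c| < R` avoids the disk of radius
`δ ≈ |f'(c)| ε` and is disjoint from its inverse, so twice its measure is at most `4π log (1 / δ)`,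
the measure of `δ < |w| < 1 / δ`. On the other hand, in the coordinate `log (z - c)` the measure is
the integral of `|(z - c) f'(z) / f(z)|²`, whose mean over each circle is at least its value `1` at
the centre, so the measure is at least `2π log (R / ε)`. Letting `ε → 0` gives `R |f'(c)| ≤ 1`.

The Cayley transform turns this into `R |p'(c)| ≤ 2` when `p` is univalent, `p(c) = 1` and
`p(z) + p(w) ≠ 0`. If `w` is an omitted value of `φ`, then `p = √((w - φ) / (w - φ(c)))` is such a
function.
-/

section Univalent

open MeasureTheory Set Filter Bornology
open scoped Real ENNReal Topology Pointwise

section Metric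

variable {X Y : Type*} [PseudoMetricSpace X] [PseudoMetricSpace Y]

theorem infDist_frontier_le_diam {s : Set X} {x : X} (hs : IsBounded s) (hx : x ∈ closure s) :
    infDist x (frontier s) ≤ diam s := by
  rcases (frontier s).eq_empty_or_nonempty with h | ⟨y, hy⟩
  · simpa [h] using diam_nonneg
  · calc infDist x (frontier s) ≤ dist x y := infDist_le_dist_of_mem hy
      _ ≤ diam (closure s) := dist_le_diam_of_mem hs.closure hx (frontier_subset_closure hy)
      _ = diam s := diam_closure s

theorem le_infDist_frontier_of_ball_subset {s : Set X} {x : X} {r : ℝ} (hs : (frontier s).Nonempty)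
    (hr : ball x r ⊆ s) : r ≤ infDist x (frontier s) := by
  refine (le_infDist hs).2 fun y hy => le_of_not_gt fun hlt => hy.2 ?_
  exact interior_maximal hr isOpen_ball (mem_ball'.2 hlt)

theorem dist_map_le_mul_diam_rpow {f : X → Y} {s : Set X} {C α : ℝ} (hC : 0 ≤ C) (hα : 0 ≤ α)
    (hs : IsBounded s) (hf : ∀ x ∈ s, ∀ y ∈ s, dist (f x) (f y) ≤ C * dist x y ^ α) :
    ∀ x ∈ s, ∀ y ∈ s, dist (f x) (f y) ≤ C * diam s ^ α := fun x hx y hy =>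
  calc dist (f x) (f y) ≤ C * dist x y ^ α := hf x hx y hy
    _ ≤ C * diam s ^ α := by
        gcongr
        exact dist_le_diam_of_mem hs hx hy

theorem isBounded_image_of_dist_le_rpow {f : X → Y} {s : Set X} {C α : ℝ} (hC : 0 ≤ C)
    (hα : 0 ≤ α) (hs : IsBounded s)
    (hf : ∀ x ∈ s, ∀ y ∈ s, dist (f x) (f y) ≤ C * dist x y ^ α) : IsBounded (f '' s) :=
  isBounded_image_iff.2 ⟨_, dist_map_le_mul_diam_rpow hC hα hs hf⟩

theorem diam_image_le_of_dist_le_rpow {f : X → Y} {s : Set X} {C α : ℝ} (hC : 0 ≤ C)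
    (hα : 0 ≤ α) (hs : IsBounded s)
    (hf : ∀ x ∈ s, ∀ y ∈ s, dist (f x) (f y) ≤ C * dist x y ^ α) :
    diam (f '' s) ≤ C * diam s ^ α :=
  diam_le_of_forall_dist_le (by positivity) <|
    forall_mem_image.2 fun x hx => forall_mem_image.2 (dist_map_le_mul_diam_rpow hC hα hs hf x hx)

end Metric

theorem frontier_nonempty_of_isBounded {E : Type*} [NormedAddCommGroup E] [NormedSpace ℝ E]
    [Nontrivial E] {s : Set E} (hne : s.Nonempty) (hs : IsBounded s) : (frontier s).Nonempty :=
  nonempty_frontier_iff.2 ⟨hne, fun h => NormedSpace.unbounded_univ ℝ E (h ▸ hs)⟩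

theorem eventually_closedBall_subset_image {𝕜 : Type*} [NontriviallyNormedField 𝕜]
    [CompleteSpace 𝕜] {f : 𝕜 → 𝕜} {f' a : 𝕜} {K : ℝ} (hf : HasStrictDerivAt f f' a) (hK : 0 ≤ K)
    (hKf : K < ‖f'‖) : ∀ᶠ ε in 𝓝[>] 0, closedBall (f a) (K * ε) ⊆ f '' closedBall a ε := by
  have hf' : f' ≠ 0 := norm_pos_iff.1 (hK.trans_lt hKf)
  let inverse : (ContinuousLinearMap.toSpanSingleton 𝕜 f').NonlinearRightInverse :=
    { toFun y := y / f'
      nnnorm := ‖f'‖₊⁻¹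
      bound' y := by simp [div_eq_inv_mul]
      right_inv' y := by simp [hf'] }
  obtain ⟨s, hs, hfs⟩ := hf.hasStrictFDerivAt.approximates_deriv_on_nhds
    (c := (‖f'‖ - K).toNNReal) (Or.inr (by simpa using hKf))
  obtain ⟨δ, hδ, hδs⟩ := nhds_basis_closedBall.mem_iff.1 hs
  filter_upwards [Ioo_mem_nhdsGT hδ] with ε hε
  simpa [SurjOn, inverse, hKf.le] using hfs.surjOn_closedBall_of_nonlinearRightInverse inverse
    hε.1.le ((closedBall_subset_closedBall hε.2.le).trans hδs)

theorem lintegral_image_eq_lintegral_enorm_deriv_sq_mul {s : Set ℂ} {f : ℂ → ℂ}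
    (hs : MeasurableSet s) (hf : ∀ z ∈ s, DifferentiableAt ℂ f z) (hinj : InjOn f s)
    (g : ℂ → ℝ≥0∞) : ∫⁻ w in f '' s, g w = ∫⁻ z in s, ‖deriv f z‖ₑ ^ 2 * g (f z) := by
  have hdet (c : ℂ) :
      ENNReal.ofReal |((ContinuousLinearMap.toSpanSingleton ℂ c).restrictScalars ℝ).det| =
        ‖c‖ₑ ^ 2 := by
    simp [ContinuousLinearMap.det, LinearMap.det_restrictScalars, Algebra.norm_complex_eq,
      normSq_eq_norm_sq, ENNReal.ofReal_pow]
  have hfderiv (z : ℂ) (hz : z ∈ s) :=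
    ((hf z hz).hasDerivAt.hasFDerivAt.restrictScalars ℝ).hasFDerivWithinAt (s := s)
  simp_rw [lintegral_image_eq_lintegral_abs_det_fderiv_mul volume hs hfderiv hinj, hdet]

theorem setLIntegral_reProdIm {s t : Set ℝ} {F : ℂ → ℝ≥0∞}
    (hF : AEMeasurable F (volume.restrict (s ×ℂ t))) :
    ∫⁻ w in s ×ℂ t, F w = ∫⁻ x in s, ∫⁻ y in t, F (x + y * I) := by
  have hpreserving := volume_preserving_equiv_real_prod.symm.restrict_preimage_emb
    measurableEquivRealProd.symm.measurableEmbedding (s ×ℂ t)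
  have hpreimage : measurableEquivRealProd.symm ⁻¹' (s ×ℂ t) = s ×ˢ t := by
    ext
    simp [mem_reProdIm]
  rw [hpreimage, Measure.volume_eq_prod, ← Measure.prod_restrict] at hpreserving
  rw [← hpreserving.lintegral_comp_emb measurableEquivRealProd.symm.measurableEmbedding]
  simpa [mk_eq_add_mul_I] using
    lintegral_prod _ (hF.comp_quasiMeasurePreserving hpreserving.quasiMeasurePreserving)

theorem two_pi_mul_enorm_le_lintegral_circleMap {E : Type*} [NormedAddCommGroup E] [NormedSpace ℂ E]
    [CompleteSpace E] {h : ℂ → E} {c : ℂ} {r : ℝ} (hh : DiffContOnCl ℂ h (ball c |r|)) :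
    ENNReal.ofReal (2 * π) * ‖h c‖ₑ ≤ ∫⁻ θ in Ioc (-π) π, ‖h (circleMap c r θ)‖ₑ := by
  have hperiodic : Function.Periodic (fun θ => h (circleMap c r θ)) (2 * π) :=
    (periodic_circleMap c r).comp h
  have hmean : ∫ θ in Ioc (-π) π, h (circleMap c r θ) = (2 * π) • h c := by
    rw [← hh.circleAverage, Real.circleAverage_def, smul_inv_smul₀ Real.two_pi_pos.ne',
      ← intervalIntegral.integral_of_le (by linarith [Real.pi_pos])]
    simpa [two_mul] using hperiodic.intervalIntegral_add_eq (-π) 0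
  calc ENNReal.ofReal (2 * π) * ‖h c‖ₑ = ‖(2 * π) • h c‖ₑ := by
        rw [enorm_smul, Real.enorm_of_nonneg Real.two_pi_pos.le]
    _ ≤ ∫⁻ θ in Ioc (-π) π, ‖h (circleMap c r θ)‖ₑ := hmean ▸ enorm_integral_le_lintegral_enorm _

theorem dslope_ne_zero_of_injOn {𝕜 : Type*} [NontriviallyNormedField 𝕜] {f : 𝕜 → 𝕜} {s : Set 𝕜}
    {c z : 𝕜} (hinj : InjOn f s) (hderiv : deriv f c ≠ 0) (hc : c ∈ s) (hz : z ∈ s) :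
    dslope f c z ≠ 0 := by
  rcases eq_or_ne z c with rfl | hzc
  · rwa [dslope_same]
  · rw [dslope_of_ne f hzc, slope_def_field]
    exact div_ne_zero (sub_ne_zero.2 (hinj.ne hz hc hzc)) (sub_ne_zero.2 hzc)

/-- The measure `dA / |w|²` on `ℂ`, i.e. area in the coordinate `log w`. The junk value `0⁻¹ = 0` in
the density at the origin is immaterial because `{0}` is a null set. -/
noncomputable def logArea : Measure ℂ :=
  volume.withDensity fun z => ‖z⁻¹‖ₑ ^ 2

theorem logArea_image {s : Set ℂ} {f : ℂ → ℂ} (hs : MeasurableSet s)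
    (hf : ∀ z ∈ s, DifferentiableAt ℂ f z) (hinj : InjOn f s) :
    logArea (f '' s) = ∫⁻ z in s, ‖logDeriv f z‖ₑ ^ 2 := by
  have himage : MeasurableSet (f '' s) :=
    hs.image_of_continuousOn_injOn (fun z hz => (hf z hz).continuousAt.continuousWithinAt) hinj
  simp_rw [logArea, withDensity_apply _ himage,
    lintegral_image_eq_lintegral_enorm_deriv_sq_mul hs hf hinj, logDeriv_apply, div_eq_mul_inv,
    enorm_mul, mul_pow]

theorem logArea_inv {s : Set ℂ} (hs : MeasurableSet s) (h0 : 0 ∉ s) :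
    logArea s⁻¹ = logArea s := by
  have hne (z : ℂ) (hz : z ∈ s) : z ≠ 0 := ne_of_mem_of_not_mem hz h0
  rw [← image_inv_eq_inv,
    logArea_image hs (fun z hz => differentiableAt_inv (hne z hz)) inv_injective.injOn, logArea,
    withDensity_apply _ hs]
  simp_rw [logDeriv_inv, neg_div, enorm_neg, one_div]

/-- The rectangle `log a < Re w < log b`, `-π < Im w ≤ π`, which `w ↦ c + exp w` maps bijectively
onto the annulus `a < |z - c| < b`. -/
def logRectangle (a b : ℝ) : Set ℂ :=
  Ioo (Real.log a) (Real.log b) ×ℂ Ioc (-π) π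

theorem measurableSet_logRectangle (a b : ℝ) : MeasurableSet (logRectangle a b) :=
  (measurableSet_Ioo.preimage measurable_re).inter (measurableSet_Ioc.preimage measurable_im)

theorem volume_logRectangle {a b : ℝ} (ha : 0 < a) (hb : 0 < b) :
    volume (logRectangle a b) = ENNReal.ofReal (2 * π * Real.log (b / a)) := by
  rw [logRectangle, ← setLIntegral_one, setLIntegral_reProdIm aemeasurable_const,
    Real.log_div hb.ne' ha.ne', ENNReal.ofReal_mul Real.two_pi_pos.le]
  simp [two_mul]

theorem injOn_add_exp_logRectangle (c : ℂ) (a b : ℝ) :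
    InjOn (fun w => c + exp w) (logRectangle a b) := fun _ hz _ hw h =>
  exp_inj_of_neg_pi_lt_of_le_pi hz.2.1 hz.2.2 hw.2.1 hw.2.2 (add_left_cancel h)

theorem image_add_exp_logRectangle (c : ℂ) {a b : ℝ} (ha : 0 < a) (hb : 0 < b) :
    (fun w => c + exp w) '' logRectangle a b = ball c b \ closedBall c a := by
  have hmem (w : ℂ) : c + exp w ∈ ball c b \ closedBall c a ↔
      w.re ∈ Ioo (Real.log a) (Real.log b) := by
    simp [norm_exp, Real.log_lt_iff_lt_exp ha, Real.lt_log_iff_exp_lt hb, and_comm]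
  refine Subset.antisymm ?_ fun z hz => ?_
  · rintro _ ⟨w, hw, rfl⟩
    exact (hmem w).2 hw.1
  · have hzc : z - c ≠ 0 := by
      intro h
      simp [sub_eq_zero.1 h, ha.le] at hz
    have hz' : c + exp (log (z - c)) = z := by simp [exp_log hzc]
    refine ⟨log (z - c), ⟨(hmem _).1 (hz'.symm ▸ hz), ?_⟩, hz'⟩
    exact ⟨neg_pi_lt_log_im _, log_im_le_pi _⟩

theorem mapsTo_add_exp_logRectangle (c : ℂ) {a b : ℝ} (ha : 0 < a) (hb : 0 < b) :
    MapsTo (fun w => c + exp w) (logRectangle a b) (ball c b) :=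
  mapsTo_iff_image_subset.2 (image_add_exp_logRectangle c ha hb ▸ sdiff_subset)

theorem logArea_annulus {a b : ℝ} (ha : 0 < a) (hb : 0 < b) :
    logArea (ball 0 b \ closedBall 0 a) = ENNReal.ofReal (2 * π * Real.log (b / a)) := by
  rw [← image_add_exp_logRectangle 0 ha hb,
    logArea_image (measurableSet_logRectangle a b) (by fun_prop)
      (injOn_add_exp_logRectangle 0 a b)]
  simpa using volume_logRectangle ha hb

theorem mul_enorm_le_lintegral_logRectangle {E : Type*} [NormedAddCommGroup E] [NormedSpace ℂ E]
    [CompleteSpace E] {h : ℂ → E} {c : ℂ} {a b : ℝ} (ha : 0 < a) (hb : 0 < b)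
    (hh : DifferentiableOn ℂ h (ball c b)) :
    ENNReal.ofReal (2 * π * Real.log (b / a)) * ‖h c‖ₑ ≤
      ∫⁻ w in logRectangle a b, ‖h (c + exp w)‖ₑ := by
  have hcont : ContinuousOn (fun w => h (c + exp w)) (logRectangle a b) :=
    hh.continuousOn.comp (by fun_prop) (mapsTo_add_exp_logRectangle c ha hb)
  have hmeas := hcont.enorm.aemeasurable (measurableSet_logRectangle a b) (μ := volume)
  have hcircle (x : ℝ) (hx : x ∈ Ioo (Real.log a) (Real.log b)) :
      ENNReal.ofReal (2 * π) * ‖h c‖ₑ ≤ ∫⁻ y in Ioc (-π) π, ‖h (c + exp (x + y * I))‖ₑ := by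
    have hball : closedBall c |Real.exp x| ⊆ ball c b :=
      closedBall_subset_ball (by simpa [Real.lt_log_iff_exp_lt hb] using hx.2)
    simpa [circleMap, Complex.exp_add] using
      two_pi_mul_enorm_le_lintegral_circleMap (hh.diffContOnCl_ball hball)
  rw [logRectangle, setLIntegral_reProdIm hmeas]
  calc ENNReal.ofReal (2 * π * Real.log (b / a)) * ‖h c‖ₑ
      = ∫⁻ _ in Ioo (Real.log a) (Real.log b), ENNReal.ofReal (2 * π) * ‖h c‖ₑ := by
        rw [setLIntegral_const, Real.volume_Ioo, Real.log_div hb.ne' ha.ne',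
          ENNReal.ofReal_mul Real.two_pi_pos.le, mul_right_comm]
    _ ≤ _ := setLIntegral_mono' measurableSet_Ioo hcircle

theorem logDeriv_comp_add_exp {f : ℂ → ℂ} {c w : ℂ}
    (hf : DifferentiableAt ℂ f (c + exp w)) (hc : f c = 0) :
    logDeriv (fun w => f (c + exp w)) w = deriv f (c + exp w) / dslope f c (c + exp w) := by
  have hcomp := logDeriv_comp (g := fun w => c + exp w) hf (by fun_prop)
  rw [Function.comp_def] at hcomp
  rw [hcomp, logDeriv_apply, dslope_of_ne _ (by simp), slope_def_field]
  simp only [differentiableAt_const, differentiableAt_exp, deriv_fun_add, deriv_const',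
    Complex.deriv_exp, zero_add, hc, sub_zero, add_sub_cancel_left]
  field_simp

theorem two_pi_mul_log_le_logArea_image {f : ℂ → ℂ} {c : ℂ} {a b : ℝ} (ha : 0 < a) (hb : 0 < b)
    (hf : DifferentiableOn ℂ f (ball c b)) (hinj : InjOn f (ball c b)) (hc : f c = 0)
    (hderiv : deriv f c ≠ 0) :
    ENNReal.ofReal (2 * π * Real.log (b / a)) ≤ logArea (f '' (ball c b \ closedBall c a)) := by
  have hcb : c ∈ ball c b := mem_ball_self hb
  have hmaps := mapsTo_add_exp_logRectangle c ha hb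
  have hfat (w : ℂ) (hw : w ∈ logRectangle a b) : DifferentiableAt ℂ f (c + exp w) :=
    hf.differentiableAt (isOpen_ball.mem_nhds (hmaps hw))
  have hquot : DifferentiableOn ℂ (fun z => (deriv f z / dslope f c z) ^ 2) (ball c b) :=
    ((hf.deriv isOpen_ball).div
      ((differentiableOn_dslope (isOpen_ball.mem_nhds hcb)).2 hf)
      fun _ => dslope_ne_zero_of_injOn hinj hderiv hcb).pow 2
  calc ENNReal.ofReal (2 * π * Real.log (b / a))
      = ENNReal.ofReal (2 * π * Real.log (b / a)) * ‖(deriv f c / dslope f c c) ^ 2‖ₑ := by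
        simp [hderiv]
    _ ≤ ∫⁻ w in logRectangle a b,
          ‖(deriv f (c + exp w) / dslope f c (c + exp w)) ^ 2‖ₑ :=
        mul_enorm_le_lintegral_logRectangle ha hb hquot
    _ = ∫⁻ w in logRectangle a b, ‖logDeriv (fun w => f (c + exp w)) w‖ₑ ^ 2 :=
        setLIntegral_congr_fun (measurableSet_logRectangle a b) fun w hw => by
          simp only [logDeriv_comp_add_exp (hfat w hw) hc, enorm_pow]
    _ = logArea ((fun w => f (c + exp w)) '' logRectangle a b) :=
        (logArea_image (measurableSet_logRectangle a b)
          (fun w hw => (hfat w hw).comp w (by fun_prop))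
          (hinj.comp (injOn_add_exp_logRectangle c a b) hmaps)).symm
    _ = logArea (f '' (ball c b \ closedBall c a)) := by
        rw [← image_add_exp_logRectangle c ha hb, image_image]

theorem logArea_le_of_mul_ne_one {s : Set ℂ} {δ : ℝ} (hs : MeasurableSet s) (hδ : 0 < δ)
    (hsub : s ⊆ ball 0 δ⁻¹ \ closedBall 0 δ) (hmul : ∀ z ∈ s, ∀ w ∈ s, z * w ≠ 1) :
    logArea s ≤ ENNReal.ofReal (2 * π * Real.log δ⁻¹) := by
  have hannulus {z : ℂ} : z ∈ ball 0 δ⁻¹ \ closedBall 0 δ ↔ ‖z‖ < δ⁻¹ ∧ δ < ‖z‖ := by simp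
  have hpos (z : ℂ) (hz : z ∈ s) : 0 < ‖z‖ := hδ.trans (hannulus.1 (hsub hz)).2
  have h0 : 0 ∉ s := fun h => (hpos 0 h).ne' norm_zero
  have hdisjoint : Disjoint s s⁻¹ := disjoint_left.2 fun z hz hz' =>
    hmul z hz z⁻¹ hz' (mul_inv_cancel₀ (norm_pos_iff.1 (hpos z hz)))
  have hunion : s ∪ s⁻¹ ⊆ ball 0 δ⁻¹ \ closedBall 0 δ := by
    refine union_subset hsub fun z hz => ?_
    have hz0 := hpos _ hz
    have hz' := hannulus.1 (hsub hz)
    rw [norm_inv] at hz0 hz'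
    exact hannulus.2 ⟨(lt_inv_comm₀ hδ (inv_pos.1 hz0)).1 hz'.2,
      (inv_lt_inv₀ (inv_pos.1 hz0) hδ).1 hz'.1⟩
  have hdouble : 2 * logArea s ≤ 2 * ENNReal.ofReal (2 * π * Real.log δ⁻¹) :=
    calc 2 * logArea s = logArea (s ∪ s⁻¹) := by
          rw [measure_union hdisjoint hs.inv, logArea_inv hs h0, two_mul]
      _ ≤ logArea (ball 0 δ⁻¹ \ closedBall 0 δ) := measure_mono hunion
      _ = ENNReal.ofReal (2 * (2 * π * Real.log δ⁻¹)) := by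
          rw [logArea_annulus hδ (inv_pos.2 hδ), div_eq_mul_inv, ← sq, Real.log_pow]
          push_cast
          ring_nf
      _ = 2 * ENNReal.ofReal (2 * π * Real.log δ⁻¹) := by
          rw [ENNReal.ofReal_mul zero_le_two, ENNReal.ofReal_ofNat]
  exact (ENNReal.mul_le_mul_iff_right two_ne_zero ENNReal.ofNat_ne_top).1 hdouble

theorem image_sdiff_subset_of_mul_ne_one {X : Type*} {f : X → ℂ} {s t : Set X} {δ : ℝ} (hδ : 0 < δ)
    (hts : t ⊆ s) (hinj : InjOn f s) (ht : closedBall 0 δ ⊆ f '' t)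
    (hmul : ∀ x ∈ s, ∀ y ∈ s, f x * f y ≠ 1) :
    f '' (s \ t) ⊆ ball 0 δ⁻¹ \ closedBall 0 δ := by
  rintro _ ⟨x, hx, rfl⟩
  have hlarge : f x ∉ closedBall 0 δ := fun h => by
    obtain ⟨y, hy, hxy⟩ := ht h
    exact hx.2 (hinj (hts hy) hx.1 hxy ▸ hy)
  refine ⟨by_contra fun hball => ?_, hlarge⟩
  have hinv : (f x)⁻¹ ∈ closedBall 0 δ := by
    simpa using inv_le_of_inv_le₀ hδ (by simpa using hball)
  obtain ⟨y, hy, hxy⟩ := ht hinv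
  refine hmul x hx.1 y (hts hy) ?_
  rw [hxy, mul_inv_cancel₀]
  intro h
  simp [h, hδ.le] at hlarge

theorem mul_le_of_closedBall_subset_image {f : ℂ → ℂ} {c : ℂ} {R ε δ : ℝ}
    (hf : DifferentiableOn ℂ f (ball c R)) (hinj : InjOn f (ball c R)) (hc : f c = 0)
    (hderiv : deriv f c ≠ 0) (hmul : ∀ z ∈ ball c R, ∀ w ∈ ball c R, f z * f w ≠ 1) (hε : 0 < ε)
    (hεR : ε < R) (hδ : 0 < δ) (hcover : closedBall 0 δ ⊆ f '' closedBall c ε) :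
    R * δ ≤ ε := by
  have hR : 0 < R := hε.trans hεR
  set s := ball c R \ closedBall c ε
  have hsR : s ⊆ ball c R := sdiff_subset
  have hmeas : MeasurableSet (f '' s) :=
    (measurableSet_ball.diff measurableSet_closedBall).image_of_continuousOn_injOn
      (hf.continuousOn.mono hsR) (hinj.mono hsR)
  have hsub : f '' s ⊆ ball 0 δ⁻¹ \ closedBall 0 δ :=
    image_sdiff_subset_of_mul_ne_one hδ (closedBall_subset_ball hεR) hinj hcover hmul
  have hmul' : ∀ z ∈ f '' s, ∀ w ∈ f '' s, z * w ≠ 1 := by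
    rintro _ ⟨z, hz, rfl⟩ _ ⟨w, hw, rfl⟩
    exact hmul z (hsR hz) w (hsR hw)
  have harea : ENNReal.ofReal (2 * π * Real.log (R / ε)) ≤
      ENNReal.ofReal (2 * π * Real.log δ⁻¹) :=
    calc _ ≤ logArea (f '' s) := two_pi_mul_log_le_logArea_image hε hR hf hinj hc hderiv
      _ ≤ _ := logArea_le_of_mul_ne_one hmeas hδ hsub hmul'
  have hlog : 0 < Real.log (R / ε) := Real.log_pos ((one_lt_div hε).2 hεR)
  have hle : R / ε ≤ δ⁻¹ := by
    rw [← Real.log_le_log_iff (by positivity) (by positivity),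
      ← mul_le_mul_iff_right₀ Real.two_pi_pos]
    exact (ENNReal.ofReal_le_ofReal_iff'.1 harea).resolve_right (not_le.2 (by positivity))
  rwa [div_le_iff₀ hε, ← div_eq_inv_mul, le_div_iff₀ hδ] at hle

theorem mul_norm_deriv_le_one_of_mul_ne_one {f : ℂ → ℂ} {c : ℂ} {R : ℝ}
    (hf : DifferentiableOn ℂ f (ball c R)) (hinj : InjOn f (ball c R)) (hc : f c = 0)
    (hmul : ∀ z ∈ ball c R, ∀ w ∈ ball c R, f z * f w ≠ 1) : R * ‖deriv f c‖ ≤ 1 := by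
  by_contra! hlt
  have hR : 0 < R := pos_of_mul_pos_left (one_pos.trans hlt) (norm_nonneg _)
  obtain ⟨K, hRK, hK⟩ := exists_between ((inv_lt_iff_one_lt_mul₀' hR).2 hlt)
  have hK0 : 0 < K := (inv_pos.2 hR).trans hRK
  have hstrict : HasStrictDerivAt f (deriv f c) c :=
    (hf.analyticAt (ball_mem_nhds c hR)).hasStrictDerivAt
  obtain ⟨ε, hcover, hε, hεR⟩ :=
    ((eventually_closedBall_subset_image hstrict hK0.le hK).and (Ioo_mem_nhdsGT hR)).exists
  have hle : R * (K * ε) ≤ ε := mul_le_of_closedBall_subset_image hf hinj hc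
    (norm_pos_iff.1 (hK0.trans hK)) hmul hε hεR (mul_pos hK0 hε) (hc ▸ hcover)
  have hRKε : 1 * ε < R * K * ε := by
    gcongr
    exact (inv_lt_iff_one_lt_mul₀' hR).1 hRK
  linarith

theorem exists_hasDerivAt_logDeriv_and_exp_eq {f : ℂ → ℂ} {c y : ℂ} {R : ℝ}
    (hf : DifferentiableOn ℂ f (ball c R)) (hne : ∀ z ∈ ball c R, f z ≠ 0) (hy : exp y = f c) :
    ∃ L : ℂ → ℂ, L c = y ∧ ∀ z ∈ ball c R, HasDerivAt L (logDeriv f z) z ∧ exp (L z) = f z := by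
  obtain ⟨L, hLc, hL⟩ := ((hf.deriv isOpen_ball).div hf hne).isExactOn_ball.with_val_at c y
  refine ⟨L, hLc, fun z hz => ⟨hL z hz, ?_⟩⟩
  have hquot (w : ℂ) (hw : w ∈ ball c R) : HasDerivAt (fun w => exp (L w) / f w) 0 w := by
    have hfw := (hf.differentiableAt (isOpen_ball.mem_nhds hw)).hasDerivAt
    refine ((hL w hw).cexp.fun_div hfw (hne w hw)).congr_deriv ?_
    simp [mul_assoc, hne w hw]
  have hconst := isOpen_ball.is_const_of_deriv_eq_zero (convex_ball c R).isPreconnected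
    (fun w hw => (hquot w hw).differentiableAt.differentiableWithinAt)
    (fun w hw => (hquot w hw).deriv) hz (mem_ball_self (pos_of_mem_ball hz))
  have hfc : f c ≠ 0 := hne c (mem_ball_self (pos_of_mem_ball hz))
  rwa [hLc, hy, div_self hfc, div_eq_one_iff_eq (hne z hz)] at hconst

theorem mul_norm_deriv_le_two_of_add_ne_zero {p : ℂ → ℂ} {c : ℂ} {R : ℝ}
    (hp : DifferentiableOn ℂ p (ball c R)) (hinj : InjOn p (ball c R)) (hc : p c = 1)
    (hadd : ∀ z ∈ ball c R, ∀ w ∈ ball c R, p z + p w ≠ 0) : R * ‖deriv p c‖ ≤ 2 := by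
  rcases le_or_gt R 0 with hR | hR
  · exact (mul_nonpos_of_nonpos_of_nonneg hR (norm_nonneg _)).trans zero_le_two
  have hcR : c ∈ ball c R := mem_ball_self hR
  have hne (z : ℂ) (hz : z ∈ ball c R) : 1 + p z ≠ 0 := hc ▸ hadd c hcR z hz
  have hcayley : R * ‖deriv (fun z => (1 - p z) / (1 + p z)) c‖ ≤ 1 := by
    refine mul_norm_deriv_le_one_of_mul_ne_one ((hp.const_sub 1).div (hp.const_add 1) hne)
      (fun z hz w hw hzw => hinj hz hw ?_) (by simp [hc]) fun z hz w hw hzw => hadd z hz w hw ?_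
    · rw [div_eq_div_iff (hne z hz) (hne w hw)] at hzw
      linear_combination -hzw / 2
    · rw [div_mul_div_comm, div_eq_one_iff_eq (mul_ne_zero (hne z hz) (hne w hw))] at hzw
      linear_combination -hzw / 2
  have hpc := (hp.differentiableAt (isOpen_ball.mem_nhds hcR)).hasDerivAt
  have hderiv : deriv (fun z => (1 - p z) / (1 + p z)) c = -deriv p c / 2 := by
    rw [((hpc.const_sub 1).fun_div (hpc.const_add 1) (hne c hcR)).deriv, hc]
    ring
  rw [hderiv, norm_div, norm_neg, RCLike.norm_ofNat] at hcayley
  linarith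

theorem koebe_one_quarter {f : ℂ → ℂ} {c : ℂ} {R : ℝ} (hf : DifferentiableOn ℂ f (ball c R))
    (hinj : InjOn f (ball c R)) : ball (f c) (R * ‖deriv f c‖ / 4) ⊆ f '' ball c R := by
  intro w hw
  by_contra hwf
  have hcR : c ∈ ball c R :=
    mem_ball_self (pos_of_mul_pos_left (by linarith [pos_of_mem_ball hw]) (norm_nonneg (deriv f c)))
  have hne (z : ℂ) (hz : z ∈ ball c R) : w - f z ≠ 0 :=
    fun h => hwf ⟨z, hz, (sub_eq_zero.1 h).symm⟩
  have hwc : w - f c ≠ 0 := hne c hcR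
  obtain ⟨L, hLc, hL⟩ := exists_hasDerivAt_logDeriv_and_exp_eq (f := fun z => (w - f z) / (w - f c))
    (y := 0) ((hf.const_sub w).div_const _) (fun z hz => div_ne_zero (hne z hz) hwc)
    (by rw [exp_zero, div_self hwc])
  have hp (z : ℂ) (hz : z ∈ ball c R) := ((hL z hz).1.div_const 2).cexp
  have hinj_sq (z : ℂ) (hz : z ∈ ball c R) (z' : ℂ) (hz' : z' ∈ ball c R)
      (h : exp (L z / 2) ^ 2 = exp (L z' / 2) ^ 2) : z = z' := by
    rw [← exp_nat_mul, ← exp_nat_mul, Nat.cast_ofNat, mul_div_cancel₀ _ two_ne_zero,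
      mul_div_cancel₀ _ two_ne_zero, (hL z hz).2, (hL z' hz').2, div_left_inj' hwc,
      sub_right_inj] at h
    exact hinj hz hz' h
  have hbound : R * ‖deriv (fun z => exp (L z / 2)) c‖ ≤ 2 := by
    refine mul_norm_deriv_le_two_of_add_ne_zero
      (fun z hz => (hp z hz).differentiableAt.differentiableWithinAt)
      (fun z hz z' hz' h => hinj_sq z hz z' hz' (congrArg (· ^ 2) h)) (by simp [hLc])
      fun z hz z' hz' h => exp_ne_zero (L z / 2) ?_
    obtain rfl : z = z' := hinj_sq z hz z' hz' (by rw [eq_neg_of_add_eq_zero_left h, neg_sq])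
    exact add_self_eq_zero.1 h
  have hlogDeriv : logDeriv (fun z => (w - f z) / (w - f c)) c = -deriv f c / (w - f c) := by
    simp [logDeriv_apply, hwc]
  rw [(hp c hcR).deriv, hlogDeriv, hLc, zero_div, exp_zero, one_mul, norm_div, norm_div, norm_neg,
    RCLike.norm_ofNat, ← dist_eq_norm, div_div, ← mul_div_assoc,
    div_le_iff₀ (mul_pos (dist_pos.2 (sub_ne_zero.1 hwc)) two_pos)] at hbound
  linarith [mem_ball.1 hw]

end Univalent

/-- Lemma 2.2 of the paper: for an (H,α)-Hölder univalent map on the disk,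
`|φ'(0)|`, `dist(φ(0), ∂U)` and `diam U` are comparable. -/
theorem holder_domain_comparability (φ : ℂ → ℂ) (H α : ℝ)
    (hH : 0 < H) (hα : 0 < α) (hα1 : α ≤ 1)
    (hdiff : DifferentiableOn ℂ φ (ball (0 : ℂ) 1))
    (hinj : Set.InjOn φ (ball (0 : ℂ) 1))
    (hHol : ∀ z₁ ∈ ball (0 : ℂ) 1, ∀ z₂ ∈ ball (0 : ℂ) 1,
      ‖φ z₁ - φ z₂‖ ≤ H * ‖deriv φ 0‖ * ‖z₁ - z₂‖ ^ α) :
    (1 / 4) * ‖deriv φ 0‖ ≤ infDist (φ 0) (frontier (φ '' ball (0 : ℂ) 1)) ∧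
    infDist (φ 0) (frontier (φ '' ball (0 : ℂ) 1)) ≤ diam (φ '' ball (0 : ℂ) 1) ∧
    diam (φ '' ball (0 : ℂ) 1) ≤ (2 : ℝ) ^ α * H * ‖deriv φ 0‖ := by
  have h0 : (0 : ℂ) ∈ ball 0 1 := mem_ball_self one_pos
  have hdist : ∀ z₁ ∈ ball (0 : ℂ) 1, ∀ z₂ ∈ ball (0 : ℂ) 1,
      dist (φ z₁) (φ z₂) ≤ H * ‖deriv φ 0‖ * dist z₁ z₂ ^ α := by
    simpa only [dist_eq_norm] using hHol
  have hbdd : Bornology.IsBounded (φ '' ball 0 1) :=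
    isBounded_image_of_dist_le_rpow (by positivity) hα.le isBounded_ball hdist
  have hmem : φ 0 ∈ φ '' ball 0 1 := Set.mem_image_of_mem φ h0
  refine ⟨?_, infDist_frontier_le_diam hbdd (subset_closure hmem), ?_⟩
  · have hkoebe : ball (φ 0) (1 / 4 * ‖deriv φ 0‖) ⊆ φ '' ball 0 1 := by
      simpa [div_eq_inv_mul] using koebe_one_quarter hdiff hinj
    exact le_infDist_frontier_of_ball_subset (frontier_nonempty_of_isBounded ⟨_, hmem⟩ hbdd) hkoebe
  · have hdiam : diam (ball (0 : ℂ) 1) ≤ 2 := by simpa using diam_ball (x := (0 : ℂ)) zero_le_one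
    calc diam (φ '' ball 0 1) ≤ H * ‖deriv φ 0‖ * diam (ball (0 : ℂ) 1) ^ α :=
          diam_image_le_of_dist_le_rpow (by positivity) hα.le isBounded_ball hdist
      _ ≤ H * ‖deriv φ 0‖ * 2 ^ α := by gcongr
      _ = 2 ^ α * H * ‖deriv φ 0‖ := by ring
end

section
/- For R > 0 let Q_R = {z ∈ ℂ : 0 < Re z < 2R and −R < Im z < R}. Let φ : ℂ → ℂ be holomorphic and injective on the right half-plane ℍ = {z ∈ ℂ : Re z > 0}, let H > 0 and 0 < α ≤ 1, let T ≥ 1, and suppose that the rescaled map satisfies the Hölder estimate |φ(T·w₁) − φ(T·w₂)| ≤ H·T·|φ′(T)|·|w₁ − w₂|^α for all w₁, w₂ ∈ Q₁. Then for all z₁, z₂ ∈ Q_T one has |φ(z₁) − φ(z₂)| ≤ 8H·|φ′(1)|·T^{2−α}·|z₁ − z₂|^α. -/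
open Complex

/-- The half-open square `Q_R = {0 < Re z < 2R, -R < Im z < R}`. -/
def Qsq (R : ℝ) : Set ℂ :=
  {z : ℂ | 0 < z.re ∧ z.re < 2 * R ∧ -R < z.im ∧ z.im < R}

/-!
By scaling, only the distortion bound `‖φ' T‖ ≤ T * ‖φ' 1‖` for an injective holomorphic `φ` on the
right half-plane is needed. Precomposing `φ` with the Möbius map from the disc that sends `0` to `z`
turns Bieberbach's bound `‖f'' 0‖ ≤ 4 * ‖f' 0‖` into
`‖Re z * φ'' z + φ' z‖ ≤ 2 * ‖φ' z‖`, so `‖φ' (x + iy)‖ / x` is decreasing in `x`.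

Bieberbach's bound follows from Gronwall's area theorem, applied to `1 / √(f (ζ²) - f 0)`. For the
area theorem, let `F z = 1 / z + g z` be injective with `g 0 = 0` and `b = g' 0`. The image of the
annulus `δ ≤ |z| ≤ ρ` has area at least `π (δ⁻² - ρ⁻² + |b|² (ρ² - δ²))`, by the mean value
property. Boundary curves are avoided in the upper bound: the real-linear map
`w ↦ w - b δ² conj w`, of determinant `1 - |b|² δ⁴`, sends this image into a disc of radius
`δ⁻¹ + O(δ²)`. Letting `δ → 0` and `ρ → 1` gives `|b| ≤ 1`.
-/

open Metric MeasureTheory Set Filter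
open scoped Real ComplexConjugate Topology

/-! ### Area of the image of an annulus -/

theorem integral_Ioo_comp_circleMap {E : Type*} [NormedAddCommGroup E] [NormedSpace ℝ E]
    (f : ℂ → E) (c : ℂ) (r : ℝ) :
    ∫ θ in Ioo (-π) π, f (circleMap c r θ) =
      (2 * π) • Real.circleAverage f c r := by
  have hper := ((periodic_circleMap c r).comp f).intervalIntegral_add_eq (-π) 0
  rw [Real.circleAverage_def, smul_inv_smul₀ (by positivity), ← integral_Ioc_eq_integral_Ioo,
    ← intervalIntegral.integral_of_le (by linarith [Real.pi_pos])]
  simpa [Function.comp_def, two_mul, add_comm, sub_eq_add_neg] using hper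

theorem setIntegral_annulus_eq_integral_circleAverage {E : Type*} [NormedAddCommGroup E]
    [NormedSpace ℝ E] {f : ℂ → E} {δ ρ : ℝ} (hδ : 0 < δ) (hδρ : δ ≤ ρ)
    (hf : ContinuousOn f (norm ⁻¹' Icc δ ρ)) :
    ∫ z in norm ⁻¹' Icc δ ρ, f z =
      ∫ r in δ..ρ, (2 * π * r) • Real.circleAverage f 0 r := by
  have hmap (r θ : ℝ) : Complex.polarCoord.symm (r, θ) = circleMap 0 r θ := by
    simp [circleMap, Complex.exp_mul_I]
  have hpolar : ContinuousOn (fun p : ℝ × ℝ => p.1 • f (circleMap 0 p.1 p.2))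
      (Icc δ ρ ×ˢ Icc (-π) π) := by
    refine continuousOn_fst.smul (hf.comp (by unfold circleMap; fun_prop) fun p hp => ?_)
    simpa [abs_of_pos (hδ.trans_le hp.1.1)] using hp.1
  have hind : ∀ p ∈ polarCoord.target, p.1 • (norm ⁻¹' Icc δ ρ).indicator f
      (Complex.polarCoord.symm p) =
        (Icc δ ρ ×ˢ univ).indicator (fun p => p.1 • f (circleMap 0 p.1 p.2)) p := by
    rintro ⟨r, θ⟩ ⟨hr, -⟩
    rw [hmap]
    simp [indicator, abs_of_pos (show 0 < r from hr)]
  have hIcc : Icc δ ρ ⊆ Ioi 0 := fun r hr => hδ.trans_le hr.1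
  calc
    ∫ z in norm ⁻¹' Icc δ ρ, f z
      = ∫ p in polarCoord.target, p.1 • (norm ⁻¹' Icc δ ρ).indicator f
          (Complex.polarCoord.symm p) := by
        rw [Complex.integral_comp_polarCoord_symm,
          integral_indicator (measurable_norm measurableSet_Icc)]
    _ = ∫ p in Icc δ ρ ×ˢ Ioo (-π) π, p.1 • f (circleMap 0 p.1 p.2) := by
        rw [setIntegral_congr_fun polarCoord.open_target.measurableSet hind,
          setIntegral_indicator (measurableSet_Icc.prod .univ), polarCoord_target,
          prod_inter_prod, inter_univ, inter_eq_right.2 hIcc]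
    _ = ∫ r in Icc δ ρ, ∫ θ in Ioo (-π) π, r • f (circleMap 0 r θ) := by
        rw [Measure.volume_eq_prod, setIntegral_prod]
        exact (hpolar.integrableOn_compact (isCompact_Icc.prod isCompact_Icc)).mono_set
          (prod_mono_right Ioo_subset_Icc_self)
    _ = ∫ r in δ..ρ, (2 * π * r) • Real.circleAverage f 0 r := by
        rw [intervalIntegral.integral_of_le hδρ, ← integral_Icc_eq_integral_Ioc]
        simp only [integral_smul, integral_Ioo_comp_circleMap, smul_smul, mul_comm]

theorem re_le_circleAverage {f : ℂ → ℝ} {Q : ℂ → ℂ} {c : ℂ} {R : ℝ}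
    (hQ : DifferentiableOn ℂ Q (closedBall c |R|)) (hf : CircleIntegrable f c R)
    (hle : ∀ z ∈ sphere c |R|, (Q z).re ≤ f z) :
    (Q c).re ≤ Real.circleAverage f c R := by
  have hQc : ContinuousOn Q (sphere c |R|) := hQ.continuousOn.mono sphere_subset_closedBall
  calc
    (Q c).re = reCLM (Real.circleAverage Q c R) := by
      rw [DiffContOnCl.circleAverage (hQ.diffContOnCl_ball le_rfl), reCLM_apply]
    _ = Real.circleAverage (reCLM ∘ Q) c R :=
      (reCLM.circleAverage_comp_comm hQc.circleIntegrable').symm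
    _ ≤ Real.circleAverage f c R :=
      Real.circleAverage_mono (reCLM.continuous.comp_continuousOn hQc).circleIntegrable' hf hle

theorem norm_sq_add_norm_sq_add_re_le_norm_add_sq (b u w : ℂ) :
    ‖u‖ ^ 2 + ‖b‖ ^ 2 + 2 * (conj b * (w - b) + conj u * w).re ≤ ‖u + w‖ ^ 2 := by
  have hwb := sq_nonneg ‖w - b‖
  simp only [← normSq_eq_norm_sq, normSq_apply, add_re, add_im, sub_re, sub_im, mul_re, conj_re,
    conj_im] at hwb ⊢
  linarith

theorem inv_pow_four_add_norm_sq_le_circleAverage {h : ℂ → ℂ} {r : ℝ} (hr : 0 < r)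
    (hh : DifferentiableOn ℂ h (closedBall 0 r)) :
    (r ^ 4)⁻¹ + ‖h 0‖ ^ 2 ≤ Real.circleAverage (fun z => ‖-(z ^ 2)⁻¹ + h z‖ ^ 2) 0 r := by
  let Q (z : ℂ) : ℂ := ((r ^ 4)⁻¹ + ‖h 0‖ ^ 2 : ℝ) +
    (2 : ℝ) * (conj (h 0) * (h z - h 0) + -(z ^ 2 / (r ^ 4 : ℝ)) * h z)
  have hconj : ∀ z ∈ sphere (0 : ℂ) r, conj (-(z ^ 2)⁻¹) = -(z ^ 2 / (r ^ 4 : ℝ)) := by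
    intro z hz
    rw [← inv_pow, inv_def, normSq_eq_norm_sq, mem_sphere_zero_iff_norm.1 hz]
    simp only [map_neg, map_pow, map_mul, conj_conj, conj_ofReal]
    push_cast
    ring
  suffices (Q 0).re ≤ Real.circleAverage (fun z => ‖-(z ^ 2)⁻¹ + h z‖ ^ 2) 0 r by
    simpa [Q, ← ofReal_pow] using this
  refine re_le_circleAverage (by rw [abs_of_pos hr]; fun_prop) ?_ fun z hz => ?_
  · refine ContinuousOn.circleIntegrable hr.le (.pow (.norm (.add (.neg (.inv₀ (by fun_prop)
      fun z hz => pow_ne_zero 2 (ne_of_mem_sphere hz hr.ne'))) ?_)) 2)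
    exact hh.continuousOn.mono sphere_subset_closedBall
  · rw [abs_of_pos hr] at hz
    have hpt := norm_sq_add_norm_sq_add_re_le_norm_add_sq (h 0) (-(z ^ 2)⁻¹) (h z)
    have hnorm : ‖-(z ^ 2)⁻¹‖ ^ 2 = (r ^ 4)⁻¹ := by
      rw [norm_neg, norm_inv, norm_pow, mem_sphere_zero_iff_norm.1 hz, inv_pow, ← pow_mul]
    rw [hconj z hz, hnorm] at hpt
    simpa only [Q, add_re, ofReal_re, re_ofReal_mul] using hpt

theorem integral_two_pi_mul_inv_pow_four_add {δ ρ : ℝ} (hδ : 0 < δ) (hδρ : δ ≤ ρ) (C : ℝ) :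
    ∫ r in δ..ρ, 2 * π * r * ((r ^ 4)⁻¹ + C) =
      π * ((δ ^ 2)⁻¹ - (ρ ^ 2)⁻¹ + C * (ρ ^ 2 - δ ^ 2)) := by
  have hne : ∀ r ∈ uIcc δ ρ, r ≠ 0 := fun r hr => (hδ.trans_le (uIcc_of_le hδρ ▸ hr).1).ne'
  have hderiv : ∀ r ∈ uIcc δ ρ, HasDerivAt (fun r : ℝ => π * (C * r ^ 2 - (r ^ 2)⁻¹))
      (2 * π * r * ((r ^ 4)⁻¹ + C)) r := by
    intro r hr
    have hr0 := hne r hr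
    refine ((((hasDerivAt_pow 2 r).const_mul C).sub
      ((hasDerivAt_pow 2 r).inv (by positivity))).const_mul π).congr_deriv ?_
    field_simp
    ring
  have hcont : ContinuousOn (fun r : ℝ => 2 * π * r * ((r ^ 4)⁻¹ + C)) (uIcc δ ρ) :=
    .mul (by fun_prop) (.add (.inv₀ (by fun_prop) fun r hr => pow_ne_zero 4 (hne r hr))
      continuousOn_const)
  rw [intervalIntegral.integral_eq_sub_of_hasDerivAt hderiv hcont.intervalIntegrable]
  ring

theorem pi_mul_le_setIntegral_annulus {h : ℂ → ℂ} {δ ρ : ℝ} (hδ : 0 < δ) (hδρ : δ ≤ ρ)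
    (hh : DifferentiableOn ℂ h (closedBall 0 ρ)) :
    π * ((δ ^ 2)⁻¹ - (ρ ^ 2)⁻¹ + ‖h 0‖ ^ 2 * (ρ ^ 2 - δ ^ 2)) ≤
      ∫ z in norm ⁻¹' Icc δ ρ, ‖-(z ^ 2)⁻¹ + h z‖ ^ 2 := by
  have hcont : ContinuousOn (fun z : ℂ => ‖-(z ^ 2)⁻¹ + h z‖ ^ 2) (norm ⁻¹' Icc δ ρ) := by
    refine (ContinuousOn.norm (.add (.neg (.inv₀ (by fun_prop) fun z hz => ?_)) ?_)).pow 2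
    · exact pow_ne_zero 2 (norm_pos_iff.1 (hδ.trans_le hz.1))
    · exact hh.continuousOn.mono fun z hz => mem_closedBall_zero_iff.2 hz.2
  have hpos : ∀ r ∈ Icc δ ρ, 0 < r := fun r hr => hδ.trans_le hr.1
  have hradial : ContinuousOn (fun r : ℝ => 2 * π * r * ((r ^ 4)⁻¹ + ‖h 0‖ ^ 2)) (Icc δ ρ) :=
    .mul (by fun_prop) (.add (.inv₀ (by fun_prop) fun r hr => pow_ne_zero 4 (hpos r hr).ne')
      continuousOn_const)
  have havg : ContinuousOn (Real.circleAverage (fun z => ‖-(z ^ 2)⁻¹ + h z‖ ^ 2) 0) (Icc δ ρ) := by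
    refine Real.ContinuousOn.circleAverage ?_ fun r hr => (hpos r hr).le
    simp only [sub_zero]
    exact hcont
  calc
    π * ((δ ^ 2)⁻¹ - (ρ ^ 2)⁻¹ + ‖h 0‖ ^ 2 * (ρ ^ 2 - δ ^ 2))
      = ∫ r in δ..ρ, 2 * π * r * ((r ^ 4)⁻¹ + ‖h 0‖ ^ 2) :=
        (integral_two_pi_mul_inv_pow_four_add hδ hδρ _).symm
    _ ≤ ∫ r in δ..ρ, (2 * π * r) •
          Real.circleAverage (fun z => ‖-(z ^ 2)⁻¹ + h z‖ ^ 2) 0 r := by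
        refine intervalIntegral.integral_mono_on hδρ (hradial.intervalIntegrable_of_Icc hδρ)
          (((continuous_const_mul (2 * π)).continuousOn.smul havg).intervalIntegrable_of_Icc hδρ)
          fun r hr => ?_
        have hr0 := hpos r hr
        rw [smul_eq_mul]
        gcongr
        exact inv_pow_four_add_norm_sq_le_circleAverage hr0
          (hh.mono (closedBall_subset_closedBall hr.2))
    _ = ∫ z in norm ⁻¹' Icc δ ρ, ‖-(z ^ 2)⁻¹ + h z‖ ^ 2 :=
        (setIntegral_annulus_eq_integral_circleAverage hδ hδρ hcont).symm

/-! ### The area theorem -/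

theorem det_restrictScalars_toSpanSingleton (c : ℂ) :
    ((ContinuousLinearMap.toSpanSingleton ℂ c).restrictScalars ℝ).det = ‖c‖ ^ 2 := by
  simp [ContinuousLinearMap.det, LinearMap.det_restrictScalars, Algebra.norm_complex_eq,
    normSq_eq_norm_sq]

theorem volume_real_image_eq_setIntegral {F F' : ℂ → ℂ} {s : Set ℂ} (hs : MeasurableSet s)
    (hF : ∀ z ∈ s, HasDerivAt F (F' z) z) (hinj : s.InjOn F) :
    volume.real (F '' s) = ∫ z in s, ‖F' z‖ ^ 2 := by
  have := integral_image_eq_integral_abs_det_fderiv_smul volume hs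
    (fun z hz => ((hF z hz).hasFDerivAt.restrictScalars ℝ).hasFDerivWithinAt) hinj
    fun _ => (1 : ℝ)
  simpa [det_restrictScalars_toSpanSingleton] using this

theorem det_id_sub_smul_conj (β : ℂ) :
    LinearMap.det (LinearMap.id - β • conjAe.toLinearMap : ℂ →ₗ[ℝ] ℂ) = 1 - ‖β‖ ^ 2 := by
  have hmatrix : LinearMap.toMatrix basisOneI basisOneI
      (LinearMap.id - β • conjAe.toLinearMap) = !![1 - β.re, -β.im; -β.im, 1 + β.re] := by
    ext i j
    fin_cases i <;> fin_cases j <;> simp [LinearMap.toMatrix_apply]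
  rw [← LinearMap.det_toMatrix basisOneI, hmatrix, Matrix.det_fin_two_of, ← normSq_eq_norm_sq,
    normSq_apply]
  ring

theorem abs_one_sub_norm_sq_mul_volume_real_le {A : Set ℂ} {β : ℂ} {R : ℝ} (hR : 0 ≤ R)
    (hA : ∀ w ∈ A, ‖w - β * conj w‖ ≤ R) :
    |1 - ‖β‖ ^ 2| * volume.real A ≤ π * R ^ 2 := by
  let L : ℂ →ₗ[ℝ] ℂ := LinearMap.id - β • conjAe.toLinearMap
  have hL : L '' A ⊆ closedBall 0 R := by
    rintro _ ⟨w, hw, rfl⟩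
    simpa [L] using hA w hw
  calc
    |1 - ‖β‖ ^ 2| * volume.real A = volume.real (L '' A) := by
      simp only [L, measureReal_def, Measure.addHaar_image_linearMap, det_id_sub_smul_conj,
        ENNReal.toReal_mul, ENNReal.toReal_ofReal (abs_nonneg _)]
    _ ≤ volume.real (closedBall (0 : ℂ) R) := measureReal_mono hL measure_closedBall_lt_top.ne
    _ = π * R ^ 2 := by simp [measureReal_def, hR, mul_comm]

theorem inv_add_mul_sub_add_mul_sq_le {B K δ r : ℝ} (hB : 0 ≤ B) (hK : 0 ≤ K) (hδ : 0 < δ)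
    (hδr : δ ≤ r) (hr1 : r ≤ 1) (hδK : 2 * (B + K) * δ ≤ 1) :
    r⁻¹ + B * (r - δ ^ 2 / r) + K * r ^ 2 ≤ δ⁻¹ + K * δ ^ 2 := by
  have hr : 0 < r := hδ.trans_le hδr
  have hslope : (B + K * r) * (r + δ) ≤ δ⁻¹ :=
    calc
      (B + K * r) * (r + δ) ≤ (B + K * 1) * (1 + 1) := by gcongr; linarith
      _ ≤ δ⁻¹ := by rw [← one_div, le_div_iff₀ hδ]; linarith
  have hfactor : δ⁻¹ + K * δ ^ 2 - (r⁻¹ + B * (r - δ ^ 2 / r) + K * r ^ 2) =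
      (r - δ) / r * (δ⁻¹ - (B + K * r) * (r + δ)) := by
    field_simp
    ring
  have hnonneg : 0 ≤ (r - δ) / r * (δ⁻¹ - (B + K * r) * (r + δ)) :=
    mul_nonneg (div_nonneg (sub_nonneg.2 hδr) hr.le) (sub_nonneg.2 hslope)
  linarith

-- `w ↦ w - b * δ² * conj w` cancels the eccentricity that the term `b * z` gives to the image of
-- the circle of radius `δ`, which therefore lies in a disc of radius `1 / δ + O(δ²)`.
theorem norm_inv_add_sub_mul_conj_le {b z w : ℂ} {δ K : ℝ} (hδ : 0 < δ) (hδz : δ ≤ ‖z‖)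
    (hz1 : ‖z‖ ≤ 1) (hK : 0 ≤ K) (hw : ‖w - b * z‖ ≤ K * ‖z‖ ^ 2) (hδK : 2 * (‖b‖ + K) * δ ≤ 1) :
    ‖z⁻¹ + w - b * δ ^ 2 * conj (z⁻¹ + w)‖ ≤ δ⁻¹ + (K + ‖b‖ * (‖b‖ + K)) * δ ^ 2 := by
  have hr : 0 < ‖z‖ := hδ.trans_le hδz
  have hwle : ‖w‖ ≤ ‖b‖ + K :=
    calc
      ‖w‖ ≤ ‖b * z‖ + ‖w - b * z‖ := norm_le_norm_add_norm_sub' _ _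
      _ ≤ ‖b‖ * 1 + K * 1 ^ 2 := by rw [norm_mul]; gcongr; exact hw.trans (by gcongr)
      _ = ‖b‖ + K := by ring
  have hsub : 0 ≤ ‖z‖ - δ ^ 2 / ‖z‖ := by
    rw [sub_nonneg, div_le_iff₀ hr, ← sq]
    gcongr
  have hsplit : z⁻¹ + w - b * δ ^ 2 * conj (z⁻¹ + w) =
      z⁻¹ + b * (z * (1 - δ ^ 2 / ‖z‖ ^ 2 : ℝ)) + (w - b * z) - b * δ ^ 2 * conj w := by
    simp only [inv_def, normSq_eq_norm_sq, map_add, map_mul, conj_conj, conj_ofReal]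
    push_cast
    ring
  have hmid : ‖z * (1 - δ ^ 2 / ‖z‖ ^ 2 : ℝ)‖ = ‖z‖ - δ ^ 2 / ‖z‖ := by
    have hfactor : ‖z‖ - δ ^ 2 / ‖z‖ = ‖z‖ * (1 - δ ^ 2 / ‖z‖ ^ 2) := by
      field_simp
    rw [hfactor] at hsub ⊢
    rw [norm_mul, norm_real, Real.norm_of_nonneg (nonneg_of_mul_nonneg_right hsub hr)]
  calc
    ‖z⁻¹ + w - b * δ ^ 2 * conj (z⁻¹ + w)‖
      ≤ ‖z⁻¹‖ + ‖b * (z * (1 - δ ^ 2 / ‖z‖ ^ 2 : ℝ))‖ + ‖w - b * z‖ + ‖b * δ ^ 2 * conj w‖ := by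
        rw [hsplit]
        exact (norm_sub_le _ _).trans (by gcongr; exact norm_add₃_le)
    _ ≤ ‖z‖⁻¹ + ‖b‖ * (‖z‖ - δ ^ 2 / ‖z‖) + K * ‖z‖ ^ 2 + ‖b‖ * δ ^ 2 * (‖b‖ + K) := by
        rw [norm_inv, norm_mul b, hmid, norm_mul (b * _), norm_mul b, norm_conj, norm_pow,
          norm_real, Real.norm_of_nonneg hδ.le]
        gcongr
    _ ≤ δ⁻¹ + K * δ ^ 2 + ‖b‖ * δ ^ 2 * (‖b‖ + K) := by
        grw [inv_add_mul_sub_add_mul_sq_le (norm_nonneg b) hK hδ hδz hz1 hδK]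
    _ = δ⁻¹ + (K + ‖b‖ * (‖b‖ + K)) * δ ^ 2 := by ring

theorem exists_norm_sub_sub_deriv_smul_le {E : Type*} [NormedAddCommGroup E] [NormedSpace ℂ E]
    [CompleteSpace E] {f : ℂ → E} {U s : Set ℂ} {a : ℂ} (hU : U ∈ 𝓝 a)
    (hf : DifferentiableOn ℂ f U) (hs : IsCompact s) (hsU : s ⊆ U) :
    ∃ K, 0 ≤ K ∧ ∀ z ∈ s, ‖f z - f a - (z - a) • deriv f a‖ ≤ K * ‖z - a‖ ^ 2 := by
  have hq : ContinuousOn (dslope (dslope f a) a) U :=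
    ((differentiableOn_dslope hU).2 ((differentiableOn_dslope hU).2 hf)).continuousOn
  obtain ⟨K, hK⟩ := hs.exists_bound_of_continuousOn (hq.mono hsU)
  refine ⟨max K 0, le_max_right _ _, fun z hz => ?_⟩
  have htaylor : f z - f a - (z - a) • deriv f a =
      (z - a) ^ 2 • dslope (dslope f a) a z := by
    rw [sq, mul_smul, sub_smul_dslope (dslope f a), smul_sub, sub_smul_dslope f, dslope_same]
  rw [htaylor, norm_smul, norm_pow, mul_comm]
  gcongr
  exact (hK z hz).trans (le_max_left _ _)

theorem pi_mul_le_volume_real_image_annulus {g : ℂ → ℂ} {δ ρ : ℝ}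
    (hg : DifferentiableOn ℂ g (ball 0 1)) (hinj : InjOn (fun z => z⁻¹ + g z) (ball 0 1 \ {0}))
    (hδ : 0 < δ) (hδρ : δ ≤ ρ) (hρ1 : ρ < 1) :
    π * ((δ ^ 2)⁻¹ - (ρ ^ 2)⁻¹ + ‖deriv g 0‖ ^ 2 * (ρ ^ 2 - δ ^ 2)) ≤
      volume.real ((fun z => z⁻¹ + g z) '' (norm ⁻¹' Icc δ ρ)) := by
  have hsub : norm ⁻¹' Icc δ ρ ⊆ ball (0 : ℂ) 1 \ {0} := fun z hz =>
    ⟨mem_ball_zero_iff.2 (hz.2.trans_lt hρ1), norm_pos_iff.1 (hδ.trans_le hz.1)⟩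
  have hderiv : ∀ z ∈ norm ⁻¹' Icc δ ρ,
      HasDerivAt (fun z => z⁻¹ + g z) (-(z ^ 2)⁻¹ + deriv g z) z :=
    fun z hz => (hasDerivAt_inv (hsub hz).2).add
      (hg.differentiableAt (isOpen_ball.mem_nhds (hsub hz).1)).hasDerivAt
  rw [volume_real_image_eq_setIntegral (measurableSet_Icc.preimage measurable_norm) hderiv
    (hinj.mono hsub)]
  exact pi_mul_le_setIntegral_annulus hδ hδρ
    ((hg.deriv isOpen_ball).mono (closedBall_subset_ball hρ1))

theorem one_sub_mul_le_sq_of_injOn_inv_add {g : ℂ → ℂ} {δ ρ K : ℝ}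
    (hg : DifferentiableOn ℂ g (ball 0 1)) (hinj : InjOn (fun z => z⁻¹ + g z) (ball 0 1 \ {0}))
    (hδ : 0 < δ) (hδρ : δ ≤ ρ) (hρ1 : ρ < 1) (hK0 : 0 ≤ K)
    (hK : ∀ z ∈ closedBall 0 ρ, ‖g z - deriv g 0 * z‖ ≤ K * ‖z‖ ^ 2)
    (hδK : 2 * (‖deriv g 0‖ + K) * δ ≤ 1) :
    (1 - ‖deriv g 0‖ ^ 2 * δ ^ 4) *
      ((δ ^ 2)⁻¹ - (ρ ^ 2)⁻¹ + ‖deriv g 0‖ ^ 2 * (ρ ^ 2 - δ ^ 2)) ≤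
    (δ⁻¹ + (K + ‖deriv g 0‖ * (‖deriv g 0‖ + K)) * δ ^ 2) ^ 2 := by
  have hlower := pi_mul_le_volume_real_image_annulus hg hinj hδ hδρ hρ1
  set b := deriv g 0
  set A : Set ℂ := (fun z => z⁻¹ + g z) '' (norm ⁻¹' Icc δ ρ)
  have hupper : |1 - ‖b * δ ^ 2‖ ^ 2| * volume.real A ≤
      π * (δ⁻¹ + (K + ‖b‖ * (‖b‖ + K)) * δ ^ 2) ^ 2 := by
    refine abs_one_sub_norm_sq_mul_volume_real_le (by positivity) ?_
    rintro _ ⟨z, hz, rfl⟩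
    exact norm_inv_add_sub_mul_conj_le hδ hz.1 (hz.2.trans hρ1.le) hK0
      (hK z (mem_closedBall_zero_iff.2 hz.2)) hδK
  have hnorm : ‖b * δ ^ 2‖ = ‖b‖ * δ ^ 2 := by
    rw [norm_mul, norm_pow, norm_real, Real.norm_of_nonneg hδ.le]
  have hbδ : ‖b‖ * δ ^ 2 ≤ 1 :=
    calc
      ‖b‖ * δ ^ 2 ≤ 2 * (‖b‖ + K) * δ * δ := by nlinarith [norm_nonneg b]
      _ ≤ 1 := mul_le_one₀ hδK hδ.le (hδρ.trans hρ1.le)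
  have hdet : |1 - ‖b * δ ^ 2‖ ^ 2| = 1 - ‖b‖ ^ 2 * δ ^ 4 := by
    rw [hnorm, abs_of_nonneg (sub_nonneg.2 (pow_le_one₀ (by positivity) hbδ))]
    ring
  refine le_of_mul_le_mul_left ?_ Real.pi_pos
  rw [mul_left_comm]
  refine (mul_le_mul_of_nonneg_left hlower ?_).trans (hdet ▸ hupper)
  exact hdet ▸ abs_nonneg _

theorem mul_sq_le_one_of_eventually_le {B C ρ : ℝ} (hρ : 0 < ρ)
    (h : ∀ᶠ δ in 𝓝[>] (0 : ℝ), (1 - B ^ 2 * δ ^ 4) *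
      ((δ ^ 2)⁻¹ - (ρ ^ 2)⁻¹ + B ^ 2 * (ρ ^ 2 - δ ^ 2)) ≤ (δ⁻¹ + C * δ ^ 2) ^ 2) :
    B * ρ ^ 2 ≤ 1 := by
  have hcancel : ∀ᶠ δ in 𝓝[>] (0 : ℝ), (1 - B ^ 2 * δ ^ 4) *
      (B ^ 2 * (ρ ^ 2 - δ ^ 2) - (ρ ^ 2)⁻¹) ≤ B ^ 2 * δ ^ 2 + 2 * C * δ + C ^ 2 * δ ^ 4 := by
    filter_upwards [h, self_mem_nhdsWithin] with δ hle hδ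
    have hinv : δ * δ⁻¹ = 1 := mul_inv_cancel₀ hδ.ne'
    rw [← inv_pow δ] at hle
    linear_combination hle + (B ^ 2 * δ ^ 2 * (1 + δ * δ⁻¹) + 2 * C * δ) * hinv
  have hleft : Continuous fun δ : ℝ =>
      (1 - B ^ 2 * δ ^ 4) * (B ^ 2 * (ρ ^ 2 - δ ^ 2) - (ρ ^ 2)⁻¹) := by fun_prop
  have hright : Continuous fun δ : ℝ => B ^ 2 * δ ^ 2 + 2 * C * δ + C ^ 2 * δ ^ 4 := by fun_prop
  have hlim : B ^ 2 * ρ ^ 2 ≤ (ρ ^ 2)⁻¹ := by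
    simpa using le_of_tendsto_of_tendsto ((hleft.tendsto 0).mono_left nhdsWithin_le_nhds)
      ((hright.tendsto 0).mono_left nhdsWithin_le_nhds) hcancel
  have hsq : (B * ρ ^ 2) ^ 2 ≤ 1 :=
    calc
      (B * ρ ^ 2) ^ 2 = B ^ 2 * ρ ^ 2 * ρ ^ 2 := by ring
      _ ≤ (ρ ^ 2)⁻¹ * ρ ^ 2 := by gcongr
      _ = 1 := inv_mul_cancel₀ (by positivity)
  exact (abs_le.1 (sq_le_one_iff_abs_le_one _ |>.1 hsq)).2

theorem norm_deriv_mul_sq_le_one_of_injOn_inv_add {g : ℂ → ℂ} {ρ : ℝ}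
    (hg : DifferentiableOn ℂ g (ball 0 1)) (hinj : InjOn (fun z => z⁻¹ + g z) (ball 0 1 \ {0}))
    (hg0 : g 0 = 0) (hρ : 0 < ρ) (hρ1 : ρ < 1) : ‖deriv g 0‖ * ρ ^ 2 ≤ 1 := by
  obtain ⟨K, hK0, hK⟩ := exists_norm_sub_sub_deriv_smul_le (ball_mem_nhds 0 one_pos) hg
    (isCompact_closedBall 0 ρ) (closedBall_subset_ball hρ1)
  simp only [hg0, sub_zero, smul_eq_mul, mul_comm _ (deriv g 0)] at hK
  have hδK : ∀ᶠ δ in 𝓝[>] (0 : ℝ), 2 * (‖deriv g 0‖ + K) * δ < 1 :=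
    nhdsWithin_le_nhds
      ((continuous_const_mul _).continuousAt.eventually_lt continuousAt_const (by simp))
  refine mul_sq_le_one_of_eventually_le
    (C := K + ‖deriv g 0‖ * (‖deriv g 0‖ + K)) hρ ?_
  filter_upwards [Ioo_mem_nhdsGT hρ, hδK] with δ hδ hδK
  exact one_sub_mul_le_sq_of_injOn_inv_add hg hinj hδ.1 hδ.2.le hρ1 hK0 hK hδK.le

theorem norm_deriv_le_one_of_injOn_inv_add {g : ℂ → ℂ} (hg : DifferentiableOn ℂ g (ball 0 1))
    (hinj : InjOn (fun z => z⁻¹ + g z) (ball 0 1 \ {0})) : ‖deriv g 0‖ ≤ 1 := by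
  have hle : ∀ᶠ ρ in 𝓝[<] (1 : ℝ), ‖deriv g 0‖ * ρ ^ 2 ≤ 1 := by
    filter_upwards [Ioo_mem_nhdsLT one_pos] with ρ hρ
    have := norm_deriv_mul_sq_le_one_of_injOn_inv_add (hg.sub_const (g 0))
      (fun z hz w hw h => hinj hz hw ?_) (sub_self _) hρ.1 hρ.2
    · simpa using this
    · simpa [← add_sub_assoc] using h
  have hlim : Continuous fun ρ : ℝ => ‖deriv g 0‖ * ρ ^ 2 := by fun_prop
  simpa using le_of_tendsto ((hlim.tendsto 1).mono_left nhdsWithin_le_nhds) hle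

/-! ### Bieberbach's second coefficient bound -/

theorem exists_differentiableOn_pow_eq {U : Set ℂ} (hUc : IsSimplyConnected U) (hUo : IsOpen U)
    {g : ℂ → ℂ} (hg : DifferentiableOn ℂ g U) (hg0 : ∀ z ∈ U, g z ≠ 0) {n : ℕ} (hn : n ≠ 0) :
    ∃ s : ℂ → ℂ, DifferentiableOn ℂ s U ∧ ∀ z, s z ^ n = g z := by
  obtain ⟨s, hs, hsg⟩ :=
    exists_continuousOn_pow_eq hUc hUo hg.continuousOn (by simpa using hg0) hn
  refine ⟨s, fun z hz => ?_, hsg⟩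
  have hsz : s z ≠ 0 := fun h => hg0 z hz (by rw [← hsg, h, zero_pow hn])
  have hUz := hUo.mem_nhds hz
  exact (HasDerivAt.of_comp_left (hs.continuousAt hUz) (hasDerivAt_pow n (s z))
    (hg.differentiableAt hUz).hasDerivAt (by simp [hn, hsz])
    (.of_forall hsg)).differentiableAt.differentiableWithinAt

theorem deriv_deriv_eq_two_smul_deriv_dslope {E : Type*} [NormedAddCommGroup E] [NormedSpace ℂ E]
    [CompleteSpace E] {f : ℂ → E} {U : Set ℂ} {a : ℂ} (hU : U ∈ 𝓝 a)
    (hf : DifferentiableOn ℂ f U) :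
    deriv (deriv f) a = (2 : ℂ) • deriv (dslope f a) a := by
  have hd : DifferentiableOn ℂ (dslope f a) U := (differentiableOn_dslope hU).2 hf
  have hderiv : deriv f =ᶠ[𝓝 a] fun z => dslope f a z + (z - a) • deriv (dslope f a) z := by
    filter_upwards [eventually_mem_nhds_iff.2 hU] with z hz
    have hprod := ((hasDerivAt_id z).sub_const a).smul (hd.differentiableAt hz).hasDerivAt
    have hf_eq : f = fun w => f a + (w - a) • dslope f a w := by
      funext w
      rw [sub_smul_dslope, add_sub_cancel]
    conv_lhs => rw [hf_eq]
    simpa [add_comm] using (hprod.const_add (f a)).deriv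
  have hdd : HasDerivAt (fun z => (z - a) • deriv (dslope f a) z) (deriv (dslope f a) a) a := by
    simpa using ((hasDerivAt_id a).sub_const a).fun_smul
      (hd.analyticAt hU).deriv.differentiableAt.hasDerivAt
  rw [hderiv.deriv_eq, ((hd.differentiableAt hU).hasDerivAt.fun_add hdd).deriv, two_smul]

theorem dslope_ne_zero_of_injOn_s5 {f : ℂ → ℂ} {U : Set ℂ} {a z : ℂ} (hinj : InjOn f U) (ha : a ∈ U)
    (hf' : deriv f a ≠ 0) (hz : z ∈ U) : dslope f a z ≠ 0 := by
  rcases eq_or_ne z a with rfl | hza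
  · rwa [dslope_same]
  · rw [dslope_of_ne f hza, slope_def_field]
    exact div_ne_zero (sub_ne_zero.2 (hinj.ne hz ha hza)) (sub_ne_zero.2 hza)

theorem inv_add_mul_dslope_sq_eq {s : ℂ → ℂ} (hs0 : s 0 ≠ 0) {ζ : ℂ} (hζ : ζ ≠ 0) :
    ζ⁻¹ + (s 0)⁻¹ * (ζ * dslope s 0 (ζ ^ 2)) = s (ζ ^ 2) / (s 0 * ζ) := by
  rw [dslope_of_ne s (pow_ne_zero 2 hζ), slope_def_field]
  field_simp
  ring

theorem sq_mem_ball_zero_one {ζ : ℂ} (hζ : ζ ∈ ball 0 1) : ζ ^ 2 ∈ ball (0 : ℂ) 1 := by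
  rw [mem_ball_zero_iff, norm_pow]
  exact pow_lt_one₀ (norm_nonneg _) (mem_ball_zero_iff.1 hζ) two_ne_zero

theorem injOn_sqrt_transform {f s : ℂ → ℂ} (hinj : InjOn f (ball 0 1))
    (hs : ∀ z ∈ ball (0 : ℂ) 1, s z ^ 2 * dslope f 0 z = 1) :
    InjOn (fun ζ => s (ζ ^ 2) / (s 0 * ζ)) (ball 0 1 \ {0}) := by
  have hs0 : s 0 ≠ 0 := fun h => by simpa [h] using hs 0 (mem_ball_self one_pos)
  have hsq {ζ : ℂ} (hζ : ζ ∈ ball 0 1 \ {0}) :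
      (s (ζ ^ 2) / (s 0 * ζ)) ^ 2 * (s 0 ^ 2 * (f (ζ ^ 2) - f 0)) = 1 := by
    have hζ0 : ζ ≠ 0 := hζ.2
    rw [← sub_smul_dslope f 0 (ζ ^ 2), smul_eq_mul, sub_zero, ← hs _ (sq_mem_ball_zero_one hζ.1)]
    field_simp
  intro ζ hζ η hη (heq : s (ζ ^ 2) / (s 0 * ζ) = s (η ^ 2) / (s 0 * η))
  have hne : s (η ^ 2) / (s 0 * η) ≠ 0 := fun h => by simpa [h] using hsq hη
  have hf : f (ζ ^ 2) = f (η ^ 2) := by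
    have hsub := (hsq hζ).trans (hsq hη).symm
    rw [heq] at hsub
    exact sub_left_injective
      (mul_left_cancel₀ (pow_ne_zero 2 hs0) (mul_left_cancel₀ (pow_ne_zero 2 hne) hsub))
  rcases sq_eq_sq_iff_eq_or_eq_neg.1
      (hinj (sq_mem_ball_zero_one hζ.1) (sq_mem_ball_zero_one hη.1) hf) with h | h
  · exact h
  · rw [h, neg_sq, mul_neg, div_neg] at heq
    exact absurd (neg_eq_self.1 heq) hne

theorem norm_deriv_le_norm_of_sq_mul_dslope_eq_one {f s : ℂ → ℂ} (hinj : InjOn f (ball 0 1))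
    (hs : DifferentiableOn ℂ s (ball 0 1))
    (hsf : ∀ z ∈ ball (0 : ℂ) 1, s z ^ 2 * dslope f 0 z = 1) : ‖deriv s 0‖ ≤ ‖s 0‖ := by
  have hs0 : s 0 ≠ 0 := fun h => by simpa [h] using hsf 0 (mem_ball_self one_pos)
  let g (ζ : ℂ) : ℂ := (s 0)⁻¹ * (ζ * dslope s 0 (ζ ^ 2))
  have hd : DifferentiableOn ℂ (fun ζ => dslope s 0 (ζ ^ 2)) (ball 0 1) :=
    ((differentiableOn_dslope (ball_mem_nhds 0 one_pos)).2 hs).comp (by fun_prop)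
      fun _ => sq_mem_ball_zero_one
  have hg : DifferentiableOn ℂ g (ball 0 1) := (differentiableOn_id.mul hd).const_mul _
  have hginj : InjOn (fun ζ => ζ⁻¹ + g ζ) (ball 0 1 \ {0}) :=
    (injOn_sqrt_transform hinj hsf).congr fun ζ hζ => (inv_add_mul_dslope_sq_eq hs0 hζ.2).symm
  have hg' : deriv g 0 = (s 0)⁻¹ * deriv s 0 := by
    refine (((hasDerivAt_id 0).mul (hd.differentiableAt
      (ball_mem_nhds 0 one_pos)).hasDerivAt).const_mul (s 0)⁻¹).deriv.trans ?_
    simp [dslope_same]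
  have hle := norm_deriv_le_one_of_injOn_inv_add hg hginj
  rwa [hg', norm_mul, norm_inv, inv_mul_le_one₀ (norm_pos_iff.2 hs0)] at hle

theorem norm_deriv_dslope_le_of_sq_mul_dslope_eq_one {f s : ℂ → ℂ}
    (hf : DifferentiableOn ℂ f (ball 0 1)) (hinj : InjOn f (ball 0 1))
    (hs : DifferentiableOn ℂ s (ball 0 1))
    (hsf : ∀ z ∈ ball (0 : ℂ) 1, s z ^ 2 * dslope f 0 z = 1) :
    ‖deriv (dslope f 0) 0‖ ≤ 2 * ‖deriv f 0‖ := by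
  have hnhds : ball (0 : ℂ) 1 ∈ 𝓝 0 := ball_mem_nhds 0 one_pos
  have hd : DifferentiableOn ℂ (dslope f 0) (ball 0 1) := (differentiableOn_dslope hnhds).2 hf
  have hs0 : s 0 ≠ 0 := fun h => by simpa [h] using hsf 0 (mem_ball_self one_pos)
  have hderiv : s 0 * deriv (dslope f 0) 0 = -2 * (deriv s 0 * deriv f 0) := by
    have hprod := ((hs.differentiableAt hnhds).hasDerivAt.fun_pow 2).fun_mul
      (hd.differentiableAt hnhds).hasDerivAt
    have hconst : (fun z => s z ^ 2 * dslope f 0 z) =ᶠ[𝓝 0] fun _ => 1 :=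
      eventually_of_mem hnhds hsf
    have := hprod.deriv.symm.trans (hconst.deriv_eq.trans (deriv_const 0 1))
    rw [dslope_same] at this
    refine mul_left_cancel₀ hs0 ?_
    linear_combination this
  refine le_of_mul_le_mul_left ?_ (norm_pos_iff.2 hs0)
  calc
    ‖s 0‖ * ‖deriv (dslope f 0) 0‖ = 2 * (‖deriv s 0‖ * ‖deriv f 0‖) := by
      rw [← norm_mul, hderiv, norm_mul, norm_mul, norm_neg, norm_ofNat]
    _ ≤ 2 * (‖s 0‖ * ‖deriv f 0‖) := by
      gcongr
      exact norm_deriv_le_norm_of_sq_mul_dslope_eq_one hinj hs hsf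
    _ = ‖s 0‖ * (2 * ‖deriv f 0‖) := by ring

theorem norm_deriv_deriv_le_of_injOn_ball {f : ℂ → ℂ} (hf : DifferentiableOn ℂ f (ball 0 1))
    (hinj : InjOn f (ball 0 1)) (hf' : deriv f 0 ≠ 0) :
    ‖deriv (deriv f) 0‖ ≤ 4 * ‖deriv f 0‖ := by
  have h0 : (0 : ℂ) ∈ ball 0 1 := mem_ball_self one_pos
  have hnhds : ball (0 : ℂ) 1 ∈ 𝓝 0 := ball_mem_nhds 0 one_pos
  have hd : DifferentiableOn ℂ (dslope f 0) (ball 0 1) := (differentiableOn_dslope hnhds).2 hf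
  have hd0 : ∀ z ∈ ball (0 : ℂ) 1, dslope f 0 z ≠ 0 := fun z => dslope_ne_zero_of_injOn_s5 hinj h0 hf'
  have hball : IsSimplyConnected (ball (0 : ℂ) 1) :=
    have := contractibleSpace_ball (x := (0 : ℂ)) one_pos
    SimplyConnectedSpace.ofContractible _
  obtain ⟨s, hs, hsd⟩ := exists_differentiableOn_pow_eq hball isOpen_ball (hd.inv hd0)
    (fun z hz => inv_ne_zero (hd0 z hz)) two_ne_zero
  have hsf : ∀ z ∈ ball (0 : ℂ) 1, s z ^ 2 * dslope f 0 z = 1 := fun z hz => by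
    rw [hsd, Pi.inv_apply, inv_mul_cancel₀ (hd0 z hz)]
  have hd' := norm_deriv_dslope_le_of_sq_mul_dslope_eq_one hf hinj hs hsf
  rw [deriv_deriv_eq_two_smul_deriv_dslope hnhds hf, norm_smul, norm_ofNat]
  linarith

/-! ### Distortion in the half-plane -/

/-- The Möbius map of the unit disc onto the right half-plane that sends `0` to `z`, for
`0 < z.re`; composing with it transfers estimates at the centre of the disc to the point `z`. -/
noncomputable def diskToHalfPlane (z ζ : ℂ) : ℂ := (z + conj z * ζ) / (1 - ζ)

theorem one_sub_ne_zero_of_mem_ball {ζ : ℂ} (hζ : ζ ∈ ball 0 1) : 1 - ζ ≠ 0 :=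
  sub_ne_zero.2 fun h => by simp [← h] at hζ

theorem diskToHalfPlane_zero (z : ℂ) : diskToHalfPlane z 0 = z := by simp [diskToHalfPlane]

theorem re_diskToHalfPlane (z ζ : ℂ) :
    (diskToHalfPlane z ζ).re = z.re * (1 - ‖ζ‖ ^ 2) / ‖1 - ζ‖ ^ 2 := by
  rw [diskToHalfPlane, div_re, ← add_div, ← normSq_eq_norm_sq, ← normSq_eq_norm_sq]
  congr 1
  simp only [normSq_apply, add_re, add_im, sub_re, sub_im, mul_re, mul_im, conj_re, conj_im,
    one_re, one_im]
  ring

theorem mapsTo_diskToHalfPlane {z : ℂ} (hz : 0 < z.re) :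
    MapsTo (diskToHalfPlane z) (ball 0 1) {w | 0 < w.re} := fun ζ hζ => by
  have hζ1 : ‖ζ‖ ^ 2 < 1 := by
    simpa [sq_lt_one_iff₀ (norm_nonneg ζ)] using hζ
  have hne := one_sub_ne_zero_of_mem_ball hζ
  rw [mem_ofPred_eq, re_diskToHalfPlane]
  exact div_pos (mul_pos hz (sub_pos.2 hζ1)) (by positivity)

theorem injOn_diskToHalfPlane {z : ℂ} (hz : z.re ≠ 0) : InjOn (diskToHalfPlane z) (ball 0 1) := by
  intro ζ hζ η hη heq
  rw [diskToHalfPlane, diskToHalfPlane, div_eq_div_iff (one_sub_ne_zero_of_mem_ball hζ)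
    (one_sub_ne_zero_of_mem_ball hη)] at heq
  have hmul : (2 * z.re : ℝ) * (ζ - η) = 0 := by
    rw [← add_conj]
    linear_combination heq
  refine sub_eq_zero.1 ((mul_eq_zero.1 hmul).resolve_left ?_)
  exact_mod_cast mul_ne_zero two_ne_zero hz

theorem hasDerivAt_diskToHalfPlane (z : ℂ) {ζ : ℂ} (hζ : 1 - ζ ≠ 0) :
    HasDerivAt (diskToHalfPlane z) (2 * z.re / (1 - ζ) ^ 2) ζ := by
  refine ((((hasDerivAt_id ζ).const_mul (conj z)).const_add z).div
    ((hasDerivAt_id ζ).const_sub 1) hζ).congr_deriv ?_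
  rw [← ofReal_ofNat, ← ofReal_mul, ← add_conj, id_eq]
  ring

theorem hasDerivAt_comp_diskToHalfPlane {φ : ℂ → ℂ} (hφ : DifferentiableOn ℂ φ {w | 0 < w.re})
    {z ζ : ℂ} (hz : 0 < z.re) (hζ : ζ ∈ ball 0 1) :
    HasDerivAt (φ ∘ diskToHalfPlane z)
      (deriv φ (diskToHalfPlane z ζ) * (2 * z.re / (1 - ζ) ^ 2)) ζ :=
  (hφ.differentiableAt ((isOpen_lt continuous_const continuous_re).mem_nhds
    (mapsTo_diskToHalfPlane hz hζ))).hasDerivAt.comp ζ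
      (hasDerivAt_diskToHalfPlane z (one_sub_ne_zero_of_mem_ball hζ))

theorem deriv_comp_diskToHalfPlane_zero {φ : ℂ → ℂ} (hφ : DifferentiableOn ℂ φ {w | 0 < w.re})
    {z : ℂ} (hz : 0 < z.re) :
    deriv (φ ∘ diskToHalfPlane z) 0 = 2 * z.re * deriv φ z := by
  rw [(hasDerivAt_comp_diskToHalfPlane hφ hz (mem_ball_self one_pos)).deriv, diskToHalfPlane_zero,
    sub_zero, one_pow, div_one, mul_comm]

theorem deriv_deriv_comp_diskToHalfPlane_zero {φ : ℂ → ℂ}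
    (hφ : DifferentiableOn ℂ φ {w | 0 < w.re}) {z : ℂ} (hz : 0 < z.re) :
    deriv (deriv (φ ∘ diskToHalfPlane z)) 0 =
      4 * z.re * (z.re * deriv (deriv φ) z + deriv φ z) := by
  have hderiv : deriv (φ ∘ diskToHalfPlane z) =ᶠ[𝓝 0]
      fun ζ => (deriv φ ∘ diskToHalfPlane z) ζ * (2 * z.re / (1 - ζ) ^ 2) :=
    eventually_of_mem (ball_mem_nhds 0 one_pos) fun ζ hζ =>
      (hasDerivAt_comp_diskToHalfPlane hφ hz hζ).deriv
  have hφ' := hasDerivAt_comp_diskToHalfPlane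
    (hφ.deriv (isOpen_lt continuous_const continuous_re)) hz (mem_ball_self one_pos)
  have hsq : HasDerivAt (fun ζ : ℂ => 2 * z.re / (1 - ζ) ^ 2) (4 * z.re : ℂ) 0 := by
    refine ((hasDerivAt_const 0 (2 * z.re : ℂ)).fun_div
      (((hasDerivAt_id 0).const_sub 1).fun_pow 2) (by simp)).congr_deriv ?_
    simp only [sub_zero, one_pow]
    ring
  rw [hderiv.deriv_eq, (hφ'.fun_mul hsq).deriv, Function.comp_apply, diskToHalfPlane_zero]
  ring

theorem norm_re_mul_deriv_deriv_add_deriv_le {φ : ℂ → ℂ}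
    (hφ : DifferentiableOn ℂ φ {z | 0 < z.re}) (hinj : InjOn φ {z | 0 < z.re}) {z : ℂ}
    (hz : 0 < z.re) (hφ' : deriv φ z ≠ 0) :
    ‖z.re * deriv (deriv φ) z + deriv φ z‖ ≤ 2 * ‖deriv φ z‖ := by
  have hmaps := mapsTo_diskToHalfPlane hz
  have hf : DifferentiableOn ℂ (φ ∘ diskToHalfPlane z) (ball 0 1) := fun ζ hζ =>
    (hasDerivAt_comp_diskToHalfPlane hφ hz hζ).differentiableAt.differentiableWithinAt
  have hderiv := deriv_comp_diskToHalfPlane_zero hφ hz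
  have hbound := norm_deriv_deriv_le_of_injOn_ball hf
    (hinj.comp (injOn_diskToHalfPlane hz.ne') hmaps) (by simp [hderiv, hφ', hz.ne'])
  rw [hderiv, deriv_deriv_comp_diskToHalfPlane_zero hφ hz] at hbound
  simp only [norm_mul, norm_ofNat, norm_real, Real.norm_of_nonneg hz.le] at hbound
  refine le_of_mul_le_mul_left ?_ (mul_pos four_pos hz)
  linarith

theorem re_mul_inner_deriv_deriv_le {φ : ℂ → ℂ} (hφ : DifferentiableOn ℂ φ {z | 0 < z.re})
    (hinj : InjOn φ {z | 0 < z.re}) {z : ℂ} (hz : 0 < z.re) :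
    z.re * inner ℝ (deriv φ z) (deriv (deriv φ) z) ≤ ‖deriv φ z‖ ^ 2 := by
  rcases eq_or_ne (deriv φ z) 0 with hφ' | hφ'
  · simp [hφ']
  have hsum : z.re * inner ℝ (deriv φ z) (deriv (deriv φ) z) + ‖deriv φ z‖ ^ 2 ≤
      2 * ‖deriv φ z‖ ^ 2 :=
    calc
      _ = inner ℝ (deriv φ z) (z.re * deriv (deriv φ) z + deriv φ z) := by
        rw [inner_add_right, real_inner_self_eq_norm_sq, ← real_smul, real_inner_smul_right]
      _ ≤ ‖deriv φ z‖ * (2 * ‖deriv φ z‖) := (real_inner_le_norm _ _).trans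
        (by gcongr; exact norm_re_mul_deriv_deriv_add_deriv_le hφ hinj hz hφ')
      _ = 2 * ‖deriv φ z‖ ^ 2 := by ring
  linarith

theorem antitoneOn_norm_div {E : Type*} [NormedAddCommGroup E] [InnerProductSpace ℝ E]
    {u u' : ℝ → E} (hu : ∀ x, 0 < x → HasDerivAt u (u' x) x)
    (hle : ∀ x, 0 < x → x * inner ℝ (u x) (u' x) ≤ ‖u x‖ ^ 2) :
    AntitoneOn (fun x => ‖u x‖ / x) (Ioi 0) := by
  have hderiv : ∀ x ∈ Ioi (0 : ℝ), HasDerivAt (fun x => ‖u x‖ ^ 2 / x ^ 2)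
      (2 / x ^ 3 * (x * inner ℝ (u x) (u' x) - ‖u x‖ ^ 2)) x := by
    intro x (hx : 0 < x)
    refine ((hu x hx).norm_sq.div (hasDerivAt_pow 2 x) (by positivity)).congr_deriv ?_
    field_simp
    ring
  have hsq : AntitoneOn (fun x => ‖u x‖ ^ 2 / x ^ 2) (Ioi 0) := by
    refine antitoneOn_of_hasDerivWithinAt_nonpos (convex_Ioi 0)
      (fun x hx => (hderiv x hx).continuousAt.continuousWithinAt)
      (fun x hx => (hderiv x (interior_subset hx)).hasDerivWithinAt) fun x hx => ?_
    have hx0 : 0 < x := interior_subset hx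
    exact mul_nonpos_of_nonneg_of_nonpos (by positivity) (sub_nonpos.2 (hle x hx0))
  intro x (hx : 0 < x) y (hy : 0 < y) hxy
  refine le_of_sq_le_sq ?_ (by positivity)
  simpa only [div_pow] using hsq hx hy hxy

theorem antitoneOn_norm_deriv_div {φ : ℂ → ℂ} (hφ : DifferentiableOn ℂ φ {z | 0 < z.re})
    (hinj : InjOn φ {z | 0 < z.re}) (y : ℝ) :
    AntitoneOn (fun x : ℝ => ‖deriv φ (x + y * I)‖ / x) (Ioi 0) := by
  have hopen : IsOpen {z : ℂ | 0 < z.re} := isOpen_lt continuous_const continuous_re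
  have hline (x : ℝ) : HasDerivAt (fun x : ℝ => (x + y * I : ℂ)) 1 x :=
    (hasDerivAt_id x).ofReal_comp.add_const _
  have hre (x : ℝ) : (x + y * I : ℂ).re = x := by simp
  refine antitoneOn_norm_div (u' := fun x => deriv (deriv φ) (x + y * I)) (fun x hx => ?_)
    fun x hx => ?_
  · have hφ'' := ((hφ.deriv hopen).differentiableAt
      (hopen.mem_nhds (show 0 < (x + y * I : ℂ).re by rwa [hre]))).hasDerivAt
    exact (hφ''.comp x (hline x)).congr_deriv (mul_one _)
  · simpa only [hre] using re_mul_inner_deriv_deriv_le hφ hinj (z := x + y * I) (by rwa [hre])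

theorem norm_deriv_ofReal_le_mul {φ : ℂ → ℂ} (hφ : DifferentiableOn ℂ φ {z | 0 < z.re})
    (hinj : InjOn φ {z | 0 < z.re}) {T : ℝ} (hT : 1 ≤ T) :
    ‖deriv φ T‖ ≤ T * ‖deriv φ 1‖ := by
  have hT0 : 0 < T := one_pos.trans_le hT
  have := antitoneOn_norm_deriv_div hφ hinj 0 (mem_Ioi.2 one_pos) (mem_Ioi.2 hT0) hT
  simpa [div_le_iff₀' hT0] using this

theorem div_mem_Qsq_one {T : ℝ} (hT : 0 < T) {z : ℂ} (hz : z ∈ Qsq T) : z / T ∈ Qsq 1 := by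
  obtain ⟨h0, hre, him, him'⟩ := hz
  refine ⟨?_, ?_, ?_, ?_⟩ <;> simp only [div_ofReal_re, div_ofReal_im]
  · positivity
  · rw [div_lt_iff₀ hT]; linarith
  · rw [lt_div_iff₀ hT]; linarith
  · rw [div_lt_iff₀ hT]; linarith

theorem norm_sub_le_mul_rpow_of_comp_mul {E : Type*} [SeminormedAddCommGroup E] {φ : ℂ → E}
    {T C α : ℝ} (hT : 0 < T)
    (hφ : ∀ w₁ ∈ Qsq 1, ∀ w₂ ∈ Qsq 1, ‖φ (T * w₁) - φ (T * w₂)‖ ≤ C * ‖w₁ - w₂‖ ^ α)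
    {z₁ z₂ : ℂ} (hz₁ : z₁ ∈ Qsq T) (hz₂ : z₂ ∈ Qsq T) :
    ‖φ z₁ - φ z₂‖ ≤ C * T ^ (-α) * ‖z₁ - z₂‖ ^ α := by
  have hbound := hφ _ (div_mem_Qsq_one hT hz₁) _ (div_mem_Qsq_one hT hz₂)
  have hT' : (T : ℂ) ≠ 0 := ofReal_ne_zero.2 hT.ne'
  rwa [mul_div_cancel₀ _ hT', mul_div_cancel₀ _ hT', ← sub_div, norm_div, norm_real,
    Real.norm_of_nonneg hT.le, Real.div_rpow (norm_nonneg _) hT.le, div_eq_inv_mul,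
    ← Real.rpow_neg hT.le, ← mul_assoc] at hbound

theorem holder_on_QT_general (φ : ℂ → ℂ) (H α T : ℝ) (hH : 0 ≤ H) (hT : 1 ≤ T)
    (hdiff : DifferentiableOn ℂ φ {z : ℂ | 0 < z.re})
    (hinj : Set.InjOn φ {z : ℂ | 0 < z.re})
    (hHol : ∀ w₁ ∈ Qsq 1, ∀ w₂ ∈ Qsq 1,
      ‖φ ((T : ℂ) * w₁) - φ ((T : ℂ) * w₂)‖
        ≤ H * T * ‖deriv φ (T : ℂ)‖ * ‖w₁ - w₂‖ ^ α) :
    ∀ z₁ ∈ Qsq T, ∀ z₂ ∈ Qsq T,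
      ‖φ z₁ - φ z₂‖ ≤ H * ‖deriv φ 1‖ * T ^ (2 - α) * ‖z₁ - z₂‖ ^ α := by
  intro z₁ hz₁ z₂ hz₂
  have hT0 : 0 < T := one_pos.trans_le hT
  calc
    ‖φ z₁ - φ z₂‖ ≤ H * T * ‖deriv φ T‖ * T ^ (-α) * ‖z₁ - z₂‖ ^ α :=
      norm_sub_le_mul_rpow_of_comp_mul hT0 hHol hz₁ hz₂
    _ ≤ H * T * (T * ‖deriv φ 1‖) * T ^ (-α) * ‖z₁ - z₂‖ ^ α := by
      gcongr
      exact norm_deriv_ofReal_le_mul hdiff hinj hT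
    _ = H * ‖deriv φ 1‖ * T ^ (2 - α) * ‖z₁ - z₂‖ ^ α := by
      rw [sub_eq_add_neg 2 α, Real.rpow_add hT0, Real.rpow_two]
      ring

/-- Inequality (33.3) in the proof of Lemma 5.1: the Hölder estimate at scale `T`
propagates to the square `Q_T`. -/
theorem holder_on_QT (φ : ℂ → ℂ) (H α T : ℝ)
    (hH : 0 < H) (hα : 0 < α) (hα1 : α ≤ 1) (hT : 1 ≤ T)
    (hdiff : DifferentiableOn ℂ φ {z : ℂ | 0 < z.re})
    (hinj : Set.InjOn φ {z : ℂ | 0 < z.re})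
    (hHol : ∀ w₁ ∈ Qsq 1, ∀ w₂ ∈ Qsq 1,
      ‖φ ((T : ℂ) * w₁) - φ ((T : ℂ) * w₂)‖
        ≤ H * T * ‖deriv φ (T : ℂ)‖ * ‖w₁ - w₂‖ ^ α) :
    ∀ z₁ ∈ Qsq T, ∀ z₂ ∈ Qsq T,
      ‖φ z₁ - φ z₂‖ ≤ 8 * H * ‖deriv φ 1‖ * T ^ (2 - α) * ‖z₁ - z₂‖ ^ α := by
  intro z₁ hz₁ z₂ hz₂
  refine (holder_on_QT_general φ H α T hH.le hT hdiff hinj hHol z₁ hz₁ z₂ hz₂).trans ?_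
  gcongr
  linarith
end
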